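/- Let (a_n)_{n≥0} be a sequence of pairwise distinct real numbers converging to some limit, such that every term of (a_n) is a wall. Then there exist a closed bounded interval I ⊆ ℝ, a continuous map f : I → I admitting no 2-cycle, and a point x ∈ I such that the sequence (fⁿ(x))_{n≥0} has the same order pattern as (a_n); that is, for all m, n: fᵐ(x) < fⁿ(x) if and only if a_m < a_n. -/

import Mathlib

/-!
A sequence all of whose terms are walls has its order pattern determined by the comparisons of
consecutive terms. Any real sequence `b` with `|b (n + 1)| ≤ |b n| / 2` consists of walls, the side
on which the rest of the sequence lies being given by the sign of `b n`; so a suitable choice of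
signs for `± (1/2) ^ n` reproduces the pattern of `a`. The shift `b n ↦ b (n + 1)` is Lipschitz,
hence extends to `ℝ`, and truncating the extension to `|f x| ≤ |x| / 2` leaves `0` as the only
periodic point.
-/

open Function
open scoped NNReal

section Walls

variable {α β : Type*} [LinearOrder α] [LinearOrder β]

/-- The term `a n` is a wall of the sequence `a`: all later terms lie on the same side of `a n`
as the next one, or coincide with `a n` if the next one does. -/
def IsWall (a : ℕ → α) (n : ℕ) : Prop :=
  (a (n + 1) > a n → ∀ m, n < m → a m > a n) ∧
  (a (n + 1) < a n → ∀ m, n < m → a m < a n) ∧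
  (a (n + 1) = a n → ∀ m, n < m → a m = a n)

theorem isWall_iff_cmp_eq {a : ℕ → α} {n : ℕ} :
    IsWall a n ↔ ∀ m, n < m → cmp (a n) (a m) = cmp (a n) (a (n + 1)) := by
  constructor
  · rintro ⟨h_above, h_below, h_const⟩ m hnm
    rcases lt_trichotomy (a n) (a (n + 1)) with h | h | h
    · rw [h.cmp_eq_lt, (h_above h m hnm).cmp_eq_lt]
    · rw [h.cmp_eq_eq, (h_const h.symm m hnm).symm.cmp_eq_eq]
    · rw [h.cmp_eq_gt, (h_below h m hnm).cmp_eq_gt]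
  · intro h
    exact ⟨fun h_above m hnm => (lt_iff_lt_of_cmp_eq_cmp (h m hnm)).2 h_above,
      fun h_below m hnm => (lt_iff_lt_of_cmp_eq_cmp (cmp_eq_cmp_symm.1 (h m hnm))).2 h_below,
      fun h_const m hnm => ((eq_iff_eq_of_cmp_eq_cmp (h m hnm)).2 h_const.symm).symm⟩

theorem cmp_eq_cmp_of_forall_isWall {a : ℕ → α} {b : ℕ → β} (ha : ∀ n, IsWall a n)
    (hb : ∀ n, IsWall b n) (hab : ∀ n, cmp (a n) (a (n + 1)) = cmp (b n) (b (n + 1))) (m n : ℕ) :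
    cmp (a m) (a n) = cmp (b m) (b n) := by
  have of_lt {i j : ℕ} (hij : i < j) : cmp (a i) (a j) = cmp (b i) (b j) := by
    rw [isWall_iff_cmp_eq.1 (ha i) j hij, isWall_iff_cmp_eq.1 (hb i) j hij, hab]
  rcases lt_trichotomy m n with hmn | rfl | hnm
  · exact of_lt hmn
  · rw [cmp_self_eq_eq, cmp_self_eq_eq]
  · exact cmp_eq_cmp_symm.1 (of_lt hnm)

end Walls

theorem cmp_eq_cmp_zero_of_abs_le_mul_abs {x y r : ℝ} (hr : r < 1) (hxy : |y| ≤ r * |x|) :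
    cmp x y = cmp x 0 := by
  have hy := abs_le.1 hxy
  rcases lt_trichotomy x 0 with hx | rfl | hx
  · rw [abs_of_neg hx] at hy
    have : x < y := by nlinarith
    rw [hx.cmp_eq_lt, this.cmp_eq_lt]
  · have : y = 0 := by simpa using hxy
    rw [this]
  · rw [abs_of_pos hx] at hy
    have : y < x := by nlinarith
    rw [hx.cmp_eq_gt, this.cmp_eq_gt]

section GeometricDecay

variable {b : ℕ → ℝ} {r : ℝ≥0}

theorem abs_le_mul_abs_of_abs_succ_le (hr : r < 1) (hb : ∀ n, |b (n + 1)| ≤ r * |b n|)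
    {m n : ℕ} (hmn : m < n) : |b n| ≤ r * |b m| := by
  have h_anti : Antitone fun n => |b n| := antitone_nat_of_succ_le fun n =>
    (hb n).trans (mul_le_of_le_one_left (abs_nonneg _) hr.le)
  obtain ⟨k, rfl⟩ := Nat.exists_eq_add_one_of_ne_zero (Nat.ne_zero_of_lt hmn)
  exact (hb k).trans (mul_le_mul_of_nonneg_left (h_anti (Nat.le_of_lt_succ hmn)) r.2)

theorem isWall_of_abs_succ_le (hr : r < 1) (hb : ∀ n, |b (n + 1)| ≤ r * |b n|) (n : ℕ) :
    IsWall b n := by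
  have h_sign (m : ℕ) (hnm : n < m) : cmp (b n) (b m) = cmp (b n) 0 :=
    cmp_eq_cmp_zero_of_abs_le_mul_abs hr (abs_le_mul_abs_of_abs_succ_le hr hb hnm)
  exact isWall_iff_cmp_eq.2 fun m hnm => (h_sign m hnm).trans (h_sign _ n.lt_succ_self).symm

theorem dist_succ_le_of_abs_succ_le (hr : r < 1) (hb : ∀ n, |b (n + 1)| ≤ r * |b n|) (m n : ℕ) :
    dist (b (m + 1)) (b (n + 1)) ≤ 2 * r / (1 - r) * dist (b m) (b n) := by
  wlog hmn : m < n generalizing m n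
  · rcases (not_lt.1 hmn).eq_or_lt with rfl | hnm
    · simp
    · simpa only [dist_comm] using this n m hnm
  have hr' : (0 : ℝ) < 1 - r := sub_pos.2 hr
  have h_decay := abs_le_mul_abs_of_abs_succ_le hr hb hmn
  have h_lower : (1 - r) * |b m| ≤ dist (b m) (b n) := by
    rw [Real.dist_eq]
    linarith [abs_sub_abs_le_abs_sub (b m) (b n)]
  calc dist (b (m + 1)) (b (n + 1)) ≤ |b (m + 1)| + |b (n + 1)| := abs_sub _ _
    _ ≤ r * |b m| + r * |b m| :=
      add_le_add (hb m) (abs_le_mul_abs_of_abs_succ_le hr hb (hmn.trans n.lt_succ_self))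
    _ = 2 * r / (1 - r) * ((1 - r) * |b m|) := by field_simp; ring
    _ ≤ 2 * r / (1 - r) * dist (b m) (b n) := by gcongr

end GeometricDecay

theorem exists_lipschitzWith_apply_eq {ι X : Type*} [PseudoMetricSpace X] {u : ι → X} {v : ι → ℝ}
    {K : ℝ≥0} (huv : ∀ i j, dist (v i) (v j) ≤ K * dist (u i) (u j)) :
    ∃ g : X → ℝ, LipschitzWith K g ∧ ∀ i, g (u i) = v i := by
  have h_factors : v.FactorsThrough u := fun i j hij =>
    dist_le_zero.1 (by simpa [hij] using huv i j)
  have h_extend (i : ι) : extend u v 0 (u i) = v i := h_factors.extend_apply 0 i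
  have h_lip : LipschitzOnWith K (extend u v 0) (Set.range u) := by
    refine LipschitzOnWith.of_dist_le_mul ?_
    rintro _ ⟨i, rfl⟩ _ ⟨j, rfl⟩
    simpa only [h_extend] using huv i j
  obtain ⟨g, hg, hg_eq⟩ := h_lip.extend_real
  exact ⟨g, hg, fun i => (hg_eq (Set.mem_range_self i)).symm.trans (h_extend i)⟩

theorem exists_continuous_iterate_eq {b : ℕ → ℝ} {r : ℝ≥0} (hr : r < 1)
    (hb : ∀ n, |b (n + 1)| ≤ r * |b n|) :
    ∃ f : ℝ → ℝ, Continuous f ∧ (∀ x, |f x| ≤ r * |x|) ∧ ∀ n, f^[n] (b 0) = b n := by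
  obtain ⟨g, hg, hgb⟩ := exists_lipschitzWith_apply_eq (u := b) (v := fun n => b (n + 1))
    (K := 2 * r / (1 - r)) fun m n => by
      simpa [NNReal.coe_sub hr.le] using dist_succ_le_of_abs_succ_le hr hb m n
  let f : ℝ → ℝ := fun x => max (-(r * |x|)) (min (r * |x|) (g x))
  have hfb (n : ℕ) : f (b n) = b (n + 1) := by
    obtain ⟨h_lower, h_upper⟩ := abs_le.1 (hb n)
    simp only [f, hgb, min_eq_right h_upper, max_eq_right h_lower]
  refine ⟨f, ?_, fun x => ?_, fun n => ?_⟩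
  · have := hg.continuous
    fun_prop
  · have : 0 ≤ r * |x| := by positivity
    exact abs_le.2 ⟨le_max_left _ _, max_le (by linarith) (min_le_left _ _)⟩
  · induction n with
    | zero => rfl
    | succ n ih => rw [iterate_succ_apply', ih, hfb]

theorem eq_zero_of_isPeriodicPt_of_norm_le {E : Type*} [NormedAddCommGroup E] {f : E → E} {r : ℝ≥0}
    (hr : r < 1) (hf : ∀ x, ‖f x‖ ≤ r * ‖x‖) {n : ℕ} (hn : n ≠ 0) {x : E}
    (hx : IsPeriodicPt f n x) : x = 0 := by
  have h_iterate (k : ℕ) : ‖f^[k] x‖ ≤ r ^ k * ‖x‖ := by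
    induction k with
    | zero => simp
    | succ k ih =>
      rw [iterate_succ_apply', pow_succ', mul_assoc]
      exact (hf _).trans (mul_le_mul_of_nonneg_left ih r.2)
  have h_le : ‖x‖ ≤ r ^ n * ‖x‖ := by simpa only [hx.eq] using h_iterate n
  have h_pow : (r : ℝ) ^ n < 1 := pow_lt_one₀ r.2 hr hn
  exact norm_le_zero_iff.1 (by nlinarith)

section GeometricModel

variable {α : Type*} [LinearOrder α]

/-- The real model of a sequence `a` of walls, with terms `± (1/2) ^ n` or `0`. Later terms of the
model are closer to `0`, so the `n`-th one is negative when `a` goes up after `n`, positive when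
`a` goes down, and `0` once `a` is constant. -/
noncomputable def geometricModel (a : ℕ → α) (n : ℕ) : ℝ :=
  match cmp (a n) (a (n + 1)) with
  | .lt => -(1 / 2) ^ n
  | .eq => 0
  | .gt => (1 / 2) ^ n

theorem cmp_geometricModel_zero (a : ℕ → α) (n : ℕ) :
    cmp (geometricModel a n) 0 = cmp (a n) (a (n + 1)) := by
  have h_pos : (0 : ℝ) < (1 / 2) ^ n := by positivity
  unfold geometricModel
  split
  case h_1 h => rw [h, (neg_neg_of_pos h_pos).cmp_eq_lt]
  case h_2 h => rw [h, cmp_self_eq_eq]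
  case h_3 h => rw [h, h_pos.cmp_eq_gt]

theorem geometricModel_eq_zero_iff {a : ℕ → α} {n : ℕ} :
    geometricModel a n = 0 ↔ a n = a (n + 1) :=
  eq_iff_eq_of_cmp_eq_cmp (cmp_geometricModel_zero a n)

theorem abs_geometricModel_of_ne {a : ℕ → α} {n : ℕ} (h : a n ≠ a (n + 1)) :
    |geometricModel a n| = (1 / 2) ^ n := by
  unfold geometricModel
  split
  case h_1 => simp
  case h_2 h_eq => exact absurd ((cmp_eq_eq_iff _ _).1 h_eq) h
  case h_3 => simp

theorem abs_geometricModel_succ_le {a : ℕ → α} {n : ℕ} (ha : IsWall a n) :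
    |geometricModel a (n + 1)| ≤ (1 / 2 : ℝ≥0) * |geometricModel a n| := by
  by_cases h_succ : a (n + 1) = a (n + 2)
  · rw [geometricModel_eq_zero_iff.2 h_succ, abs_zero]
    positivity
  · have h : a n ≠ a (n + 1) := fun h =>
      h_succ (h.symm.trans (ha.2.2 h.symm (n + 2) (by omega)).symm)
    rw [abs_geometricModel_of_ne h_succ, abs_geometricModel_of_ne h, pow_succ']
    norm_num

theorem cmp_geometricModel {a : ℕ → α} (ha : ∀ n, IsWall a n) (m n : ℕ) :
    cmp (geometricModel a m) (geometricModel a n) = cmp (a m) (a n) := by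
  have h_decay (n : ℕ) := abs_geometricModel_succ_le (ha n)
  have h_wall := isWall_of_abs_succ_le one_half_lt_one h_decay
  refine cmp_eq_cmp_of_forall_isWall h_wall ha (fun k => ?_) m n
  rw [cmp_eq_cmp_zero_of_abs_le_mul_abs one_half_lt_one (h_decay k), cmp_geometricModel_zero]

theorem stmt_7_general {a : ℕ → α} (ha : ∀ n, IsWall a n) :
    ∃ (c d : ℝ) (f : ℝ → ℝ), c ≤ d ∧
      ContinuousOn f (Set.Icc c d) ∧
      Set.MapsTo f (Set.Icc c d) (Set.Icc c d) ∧
      (¬ ∃ x ∈ Set.Icc c d, ∃ y ∈ Set.Icc c d, x ≠ y ∧ f x = y ∧ f y = x) ∧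
      ∃ x ∈ Set.Icc c d, ∀ m n : ℕ, (f^[m] x < f^[n] x ↔ a m < a n) := by
  obtain ⟨f, hf_cont, hf_le, hf_orbit⟩ :=
    exists_continuous_iterate_eq one_half_lt_one fun n => abs_geometricModel_succ_le (ha n)
  refine ⟨-|geometricModel a 0|, |geometricModel a 0|, f, neg_le_self (abs_nonneg _),
    hf_cont.continuousOn, fun x hx => ?_, ?_, geometricModel a 0, abs_le.1 le_rfl, fun m n => ?_⟩
  · have h_abs : |f x| ≤ |x| :=
      (hf_le x).trans (mul_le_of_le_one_left (abs_nonneg x) one_half_lt_one.le)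
    exact abs_le.1 (h_abs.trans (abs_le.2 hx))
  · rintro ⟨x, -, y, -, hxy, hfx, hfy⟩
    have eq_zero {z : ℝ} (hz : f (f z) = z) : z = 0 :=
      eq_zero_of_isPeriodicPt_of_norm_le one_half_lt_one hf_le two_ne_zero hz
    exact hxy ((eq_zero (by rw [hfx, hfy])).trans (eq_zero (by rw [hfy, hfx])).symm)
  · rw [hf_orbit, hf_orbit]
    exact lt_iff_lt_of_cmp_eq_cmp (cmp_geometricModel ha m n)

end GeometricModel

/-- Every convergent sequence of distinct reals all of whose terms are walls is
realized (up to order pattern) as an orbit of an interval map with no 2-cycle. -/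
theorem stmt_7 (a : ℕ → ℝ) (hinj : Function.Injective a)
    (hconv : ∃ L : ℝ, Filter.Tendsto a Filter.atTop (nhds L))
    (hwall : ∀ n : ℕ,
      (a (n+1) > a n → ∀ m, n < m → a m > a n) ∧
      (a (n+1) < a n → ∀ m, n < m → a m < a n) ∧
      (a (n+1) = a n → ∀ m, n < m → a m = a n)) :
    ∃ (c d : ℝ) (f : ℝ → ℝ), c ≤ d ∧
      ContinuousOn f (Set.Icc c d) ∧
      Set.MapsTo f (Set.Icc c d) (Set.Icc c d) ∧
      (¬ ∃ x ∈ Set.Icc c d, ∃ y ∈ Set.Icc c d, x ≠ y ∧ f x = y ∧ f y = x) ∧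
      ∃ x ∈ Set.Icc c d, ∀ m n : ℕ, (f^[m] x < f^[n] x ↔ a m < a n) :=
  stmt_7_general hwall
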